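/- Let G be a group and A an abelian group containing an element of infinite order. Suppose that for each g ∈ G there are given a subset D_g ⊆ A and a map ψ_g : D_g → A such that: (i) each ψ_g is a partial dilatation of A; (ii) D_e = A and ψ_e is the identity map of A, where e is the identity of G; and (iii) for all g, h ∈ G and all x ∈ D_g with ψ_g(x) ∈ D_h, one has x ∈ D_{gh} and ψ_{gh}(x) = ψ_h(ψ_g(x)) (that is, ψ_{gh} extends the composition of ψ_g followed by ψ_h). Then the dilatation rate function λ : G → ℚˣ defined by λ(g) = λ(ψ_g) is a group homomorphism: λ(gh) = λ(g)·λ(h) for all g, h ∈ G, and λ(e) = 1. -/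

import Mathlib

/-!
If `(p, q)` and `(p', q')` are defining pairs of partial maps `f` and `f'`, then
`(p * p', q * q')` is a defining pair of `f` followed by `f'`, hence of every partial map extending
that composition. Two defining pairs of one map are proportional when the scalars act faithfully,
and an element of infinite order makes `ℤ` act faithfully. So the rate is multiplicative, and
`λ(1) = λ(1)²` with `λ(1) ≠ 0` gives `λ(1) = 1`.
-/

section DefiningPair

variable {R α : Type*}

/-- `(p, q)` is a defining pair of the partial map `f`: it is defined at every `q • v`, with value
`p • v` there. Domain and value are expressed together by membership in `f (q • v)`, and
nonvanishing of `p` and `q` is left out, so that the notion makes sense for any scalar action. -/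
def IsDefiningPair [SMul R α] (f : α →. α) (p q : R) : Prop :=
  ∀ v : α, p • v ∈ f (q • v)

namespace IsDefiningPair

theorem mono [SMul R α] {f f' : α →. α} {p q : R} (hf : IsDefiningPair f p q)
    (hff' : ∀ x, f x ≤ f' x) : IsDefiningPair f' p q :=
  fun v ↦ hff' _ _ (hf v)

variable [CommMonoid R] [MulAction R α] {f f' : α →. α} {p q p' q' : R}

theorem comp (hf' : IsDefiningPair f' p' q') (hf : IsDefiningPair f p q) :
    IsDefiningPair (f'.comp f) (p * p') (q * q') := by
  intro v
  have hfv : q' • p • v ∈ f ((q * q') • v) := by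
    simpa only [mul_smul, smul_comm p q'] using hf (q' • v)
  have hfv' : (p * p') • v ∈ f' (q' • p • v) := by
    simpa only [mul_smul, smul_comm p' p] using hf' (p • v)
  rw [PFun.comp_apply]
  exact Part.mem_bind hfv hfv'

variable [FaithfulSMul R α]

theorem mul_eq_mul (h : IsDefiningPair f p q) (h' : IsDefiningPair f p' q') :
    p * q' = p' * q := by
  refine eq_of_smul_eq_smul (α := α) fun v ↦ ?_
  have hv : (p * q') • v ∈ f ((q * q') • v) := by simpa only [mul_smul] using h (q' • v)
  have hv' : (p' * q) • v ∈ f ((q * q') • v) := by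
    simpa only [mul_smul, smul_comm q q'] using h' (q • v)
  exact Part.mem_unique hv hv'

theorem map_div_map_eq {K : Type*} [CommGroupWithZero K] (φ : R →* K)
    (h : IsDefiningPair f p q) (h' : IsDefiningPair f p' q') (hq : φ q ≠ 0) (hq' : φ q' ≠ 0) :
    φ p / φ q = φ p' / φ q' := by
  rw [div_eq_div_iff hq hq', ← map_mul, ← map_mul, h.mul_eq_mul h']

theorem map_div_map_eq_mul_of_comp_le {K : Type*} [CommGroupWithZero K] (φ : R →* K)
    {f'' : α →. α} {p'' q'' : R} (hf'' : IsDefiningPair f'' p'' q'')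
    (hf : IsDefiningPair f p q) (hf' : IsDefiningPair f' p' q') (hcomp : ∀ x, f'.comp f x ≤ f'' x)
    (hq'' : φ q'' ≠ 0) (hq : φ q ≠ 0) (hq' : φ q' ≠ 0) :
    φ p'' / φ q'' = φ p / φ q * (φ p' / φ q') := by
  have hqq' : φ (q * q') ≠ 0 := by simpa only [map_mul] using mul_ne_zero hq hq'
  calc φ p'' / φ q'' = φ (p * p') / φ (q * q') :=
        hf''.map_div_map_eq φ ((hf'.comp hf).mono hcomp) hq'' hqq'
    _ = φ p / φ q * (φ p' / φ q') := by rw [map_mul, map_mul, mul_div_mul_comm]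

end IsDefiningPair

end DefiningPair

theorem faithfulSMul_of_forall_smul_eq_zero {R A : Type*} [Ring R] [AddCommGroup A] [Module R A]
    (a : A) (ha : ∀ r : R, r • a = 0 → r = 0) : FaithfulSMul R A where
  eq_of_smul_eq_smul h := sub_eq_zero.mp (ha _ (by rw [sub_smul, h a, sub_self]))

theorem dilatationRate_is_hom_general
    {M R K α : Type*} [MulOneClass M] [CommMonoid R] [CommGroupWithZero K] [MulAction R α]
    [FaithfulSMul R α] (φ : R →* K)
    (D : M → Set α) (ψ : ∀ g : M, D g → α)
    (p q : M → R)
    (hp : φ (p 1) ≠ 0) (hq : ∀ g, φ (q g) ≠ 0)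
    (hD : ∀ (g : M) (v : α), q g • v ∈ D g)
    (hdil : ∀ (g : M) (v : α), ψ g ⟨q g • v, hD g v⟩ = p g • v)
    (hcomp : ∀ (g h : M) (x : α) (hx : x ∈ D g) (hx' : ψ g ⟨x, hx⟩ ∈ D h),
        ∃ hxgh : x ∈ D (g * h), ψ (g * h) ⟨x, hxgh⟩ = ψ h ⟨ψ g ⟨x, hx⟩, hx'⟩) :
    (∀ g h : M,
        φ (p (g * h)) / φ (q (g * h)) = φ (p g) / φ (q g) * (φ (p h) / φ (q h))) ∧
      φ (p 1) / φ (q 1) = 1 := by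
  let Ψ (g : M) : α →. α := fun x ↦ ⟨x ∈ D g, fun hx ↦ ψ g ⟨x, hx⟩⟩
  have hpair (g : M) : IsDefiningPair (Ψ g) (p g) (q g) := fun v ↦ ⟨hD g v, hdil g v⟩
  have hext (g h : M) (x : α) : (Ψ h).comp (Ψ g) x ≤ Ψ (g * h) x := by
    rintro _ ⟨⟨hx, hx'⟩, rfl⟩
    exact hcomp g h x hx hx'
  have hmul (g h : M) :
      φ (p (g * h)) / φ (q (g * h)) = φ (p g) / φ (q g) * (φ (p h) / φ (q h)) :=
    (hpair (g * h)).map_div_map_eq_mul_of_comp_le φ (hpair g) (hpair h) (hext g h)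
      (hq (g * h)) (hq g) (hq h)
  have hidem : φ (p 1) / φ (q 1) * (φ (p 1) / φ (q 1)) = φ (p 1) / φ (q 1) := by
    rw [← hmul 1 1, mul_one]
  exact ⟨hmul, (mul_eq_left₀ (div_ne_zero hp (hq 1))).mp hidem⟩

/-- If a group `G` partially acts on the right on an abelian group `A`
(containing an element of infinite order) by partial dilatations, then the
dilatation rate function `λ : G → ℚˣ`, `λ(g) = p(g)/q(g)`, is a group homomorphism:
`λ(gh) = λ(g)·λ(h)` and `λ(e) = 1`. -/
theorem dilatationRate_is_hom
    {G : Type*} [Group G] {A : Type*} [AddCommGroup A]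
    (a : A) (ha : ∀ n : ℤ, n • a = 0 → n = 0)
    (D : G → Set A) (ψ : ∀ g : G, D g → A)
    (p q : G → ℤ)
    (hp : ∀ g, p g ≠ 0) (hq : ∀ g, q g ≠ 0)
    (hD : ∀ (g : G) (v : A), q g • v ∈ D g)
    (hdil : ∀ (g : G) (v : A), ψ g ⟨q g • v, hD g v⟩ = p g • v)
    (hD1 : D 1 = Set.univ)
    (hψ1 : ∀ x : D 1, ψ 1 x = (x : A))
    (hcomp : ∀ (g h : G) (x : A) (hx : x ∈ D g)
        (hx' : ψ g ⟨x, hx⟩ ∈ D h),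
        ∃ hxgh : x ∈ D (g * h),
          ψ (g * h) ⟨x, hxgh⟩ = ψ h ⟨ψ g ⟨x, hx⟩, hx'⟩) :
    (∀ g h : G,
        (p (g * h) : ℚ) / (q (g * h) : ℚ) =
          ((p g : ℚ) / (q g : ℚ)) * ((p h : ℚ) / (q h : ℚ))) ∧
      (p (1 : G) : ℚ) / (q (1 : G) : ℚ) = 1 := by
  have := faithfulSMul_of_forall_smul_eq_zero a ha
  exact dilatationRate_is_hom_general (Int.castRingHom ℚ : ℤ →* ℚ) D ψ p q
    (Int.cast_ne_zero.mpr (hp 1)) (fun g ↦ Int.cast_ne_zero.mpr (hq g)) hD hdil hcomp
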